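/- Let λ, μ, ν be partitions. If the Littlewood–Richardson coefficient c^λ_{μ,ν} is nonzero, then for every outer corner (c_1, r_1) of μ and every outer corner (c_2, r_2) of ν, the point (c_1+c_2, r_1+r_2) does not belong to the Young diagram [λ]; that is, λ_{r_1+r_2+1} ≤ c_1+c_2. -/

import Mathlib

open MvPolynomial Finset

/-- Semistandardness of a filling of an arbitrary finite set of cells `s ⊆ ℕ × ℕ`
(cells are `(row, column)` pairs): entries weakly increase along rows and strictly
increase down columns (for adjacent cells that both lie in `s`). -/
def IsSemistandardOn (s : Finset (ℕ × ℕ)) {N : ℕ} (T : s → Fin N) : Prop :=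
  (∀ (i j : ℕ) (h1 : (i, j) ∈ s) (h2 : (i, j + 1) ∈ s),
      T ⟨(i, j), h1⟩ ≤ T ⟨(i, j + 1), h2⟩) ∧
  (∀ (i j : ℕ) (h1 : (i, j) ∈ s) (h2 : (i + 1, j) ∈ s),
      T ⟨(i, j), h1⟩ < T ⟨(i + 1, j), h2⟩)

open scoped Classical in
/-- The generating polynomial, in `N` variables, of semistandard fillings of the cell
set `s` with entries in `{0, …, N-1}`. -/
noncomputable def cellSchur (N : ℕ) (s : Finset (ℕ × ℕ)) : MvPolynomial (Fin N) ℤ :=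
  ∑ T ∈ Finset.univ.filter (fun T : s → Fin N => IsSemistandardOn s T),
    ∏ c : s, X (T c)

/-- The Schur polynomial `s_μ(x_1, …, x_N)`: the generating function of semistandard
Young tableaux of shape `μ` with entries in `{0, …, N-1}`. -/
noncomputable def schurPoly (N : ℕ) (μ : YoungDiagram) : MvPolynomial (Fin N) ℤ :=
  cellSchur N μ.cells

/-- `(c, r)` (column `c`, row `r`, 0-indexed) is an outer corner of `μ`: it is not a
cell of `μ`, and adding it to `μ` again yields a Young diagram. -/
def IsOuterCorner (μ : YoungDiagram) (c r : ℕ) : Prop :=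
  (r, c) ∉ μ ∧ ∃ ν : YoungDiagram, ν.cells = insert (r, c) μ.cells

/-! Multiplying by alternants turns the problem into one about tableaux. Since `s_ν` is symmetric,
`a_{μ+ρ} s_ν` is the sum of `a_{μ+wt(T)+ρ}` over all semistandard tableaux `T` of shape `ν`.
Following Stembridge, the terms in which some final columns of `T` violate the
Littlewood–Richardson condition cancel: apply the Bender–Knuth involution to the columns to the
left of the first violation. For `μ = 0` only one tableau is left, so `a_ρ s_λ = a_{λ+ρ}`, and the
coefficient of `s_λ` in `s_μ s_ν` counts Littlewood–Richardson tableaux `T` with `μ + wt(T) = λ`.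

In such a tableau let `k = r₁ + r₂`. At most `c₂` letters `k` lie in columns `< c₂`. The remaining
ones lie in rows `< r₂`, because `(r₂, c₂)` is not a cell of `ν`. Lowering the letter and the number
of rows together `r₂` times shows that `μ_k` plus the number of these is at most `μ_{r₁}`. Hence
`λ_k ≤ μ_{r₁} + c₂ ≤ c₁ + c₂`. -/

lemma perm_eq_one_of_strictAnti_comp {ι α : Type*} [Finite ι] [LinearOrder ι] [Preorder α]
    {m : ι → α} (hm : StrictAnti m) {σ : Equiv.Perm ι} (h : StrictAnti (m ∘ σ)) : σ = 1 := by
  have hσ : StrictMono σ := fun i j hij ↦ hm.lt_iff_gt.1 (h hij)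
  exact Equiv.coe_fn_injective ((hσ.range_inj strictMono_id).1 (by simp [σ.surjective.range_eq]))

lemma eq_comp_swap {ι α : Type*} [DecidableEq ι] {f g : ι → α} {a b : ι} (ha : f a = g b)
    (hb : f b = g a) (h : ∀ i, i ≠ a → i ≠ b → f i = g i) : f = g ∘ Equiv.swap a b := by
  ext i
  rw [Function.comp_apply, Equiv.swap_apply_def]
  split_ifs with hia hib
  exacts [hia ▸ ha, hib ▸ hb, h i hia hib]

lemma isSymmetric_of_rename_swap_adjacent {N : ℕ} {R : Type*} [CommSemiring R]
    {p : MvPolynomial (Fin N) R}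
    (h : ∀ k (hk : k + 1 < N),
      rename (Equiv.swap (⟨k, k.lt_succ_self.trans hk⟩ : Fin N) ⟨k + 1, hk⟩) p = p) :
    p.IsSymmetric := by
  intro σ
  cases N with
  | zero => rw [Subsingleton.elim σ 1, Equiv.Perm.coe_one, rename_id_apply]
  | succ n =>
    have hσ : σ ∈ Submonoid.closure (Set.range fun i : Fin n ↦ Equiv.swap i.castSucc i.succ) := by
      simp [Equiv.Perm.mclosure_swap_castSucc_succ]
    induction hσ using Submonoid.closure_induction with
    | mem _ hσ =>
      obtain ⟨i, rfl⟩ := hσ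
      exact h i (Nat.succ_lt_succ i.isLt)
    | one => rw [Equiv.Perm.coe_one, rename_id_apply]
    | mul σ τ _ _ hσ hτ => rw [Equiv.Perm.coe_mul, ← rename_rename, hτ, hσ]

section Alternant

variable {ι R : Type*} [Fintype ι] [CommRing R]

variable (R) in
/-- The alternant `a_m = det (x_j ^ m_i)` with exponents `m`. -/
noncomputable def alternant [DecidableEq ι] (m : ι → ℕ) : MvPolynomial ι R :=
  Matrix.det (Matrix.of fun i j ↦ X j ^ m i)

lemma alternant_eq_sum [DecidableEq ι] (m : ι → ℕ) :
    alternant R m = ∑ σ : Equiv.Perm ι, Equiv.Perm.sign σ • ∏ i, X i ^ m (σ i) := by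
  simp [alternant, Matrix.det_apply]

lemma alternant_comp_swap [DecidableEq ι] (m : ι → ℕ) {i j : ι} (hij : i ≠ j) :
    alternant R (m ∘ Equiv.swap i j) = -alternant R m := by
  have h := Matrix.det_permute (Equiv.swap i j)
    (Matrix.of fun i j ↦ (X j : MvPolynomial ι R) ^ m i)
  rw [Equiv.Perm.sign_swap hij, Units.val_neg, Units.val_one, Int.cast_neg, Int.cast_one,
    neg_one_mul] at h
  exact h

lemma alternant_mul_sum_of_isSymmetric [DecidableEq ι] {τ : Type*} {S : Finset τ}
    {w : τ → ι → ℕ} (h : (∑ t ∈ S, ∏ i, X i ^ w t i : MvPolynomial ι R).IsSymmetric)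
    (m : ι → ℕ) :
    alternant R m * ∑ t ∈ S, ∏ i, X i ^ w t i = ∑ t ∈ S, alternant R (m + w t) := by
  have hperm (σ : Equiv.Perm ι) : (∑ t ∈ S, ∏ i, X i ^ w t i : MvPolynomial ι R) =
      ∑ t ∈ S, ∏ i, X i ^ w t (σ i) := by
    conv_lhs => rw [← h σ.symm, map_sum]
    refine sum_congr rfl fun t _ ↦ ?_
    rw [map_prod, ← Equiv.prod_comp σ]
    simp
  simp_rw [alternant_eq_sum, sum_mul]
  rw [sum_comm]
  refine sum_congr rfl fun σ _ ↦ ?_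
  rw [hperm σ, smul_mul_assoc, mul_sum, smul_sum]
  simp [pow_add, prod_mul_distrib]

lemma coeff_alternant_of_strictAnti [LinearOrder ι] {m e : ι → ℕ}
    (hm : StrictAnti m) (he : StrictAnti e) :
    coeff (Finsupp.equivFunOnFinite.symm e) (alternant R m) = if m = e then 1 else 0 := by
  have hmon (σ : Equiv.Perm ι) : ∏ i, (X i : MvPolynomial ι R) ^ m (σ i) =
      monomial (Finsupp.equivFunOnFinite.symm (m ∘ σ)) 1 := by
    simp [monomial_eq, Finsupp.prod_fintype]
  simp_rw [alternant_eq_sum, coeff_sum, hmon]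
  rw [sum_eq_single 1]
  · simp [coeff_monomial]
  · intro σ _ hσ
    have hne : m ∘ σ ≠ e := fun h ↦ hσ (perm_eq_one_of_strictAnti_comp hm (h ▸ he))
    simp [coeff_monomial, hne]
  · simp

end Alternant

/-- The exponent vector `l + ρ` with `ρ = (N - 1, …, 1, 0)`, which makes weakly decreasing sequences
strictly decreasing. -/
def rhoShift (N : ℕ) (l : ℕ → ℕ) (i : Fin N) : ℕ :=
  l i + i.rev

lemma rhoShift_inj {N : ℕ} {l l' : ℕ → ℕ} :
    rhoShift N l = rhoShift N l' ↔ ∀ i < N, l i = l' i := by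
  simp [funext_iff, rhoShift, Fin.forall_iff]

lemma strictAnti_rhoShift (N : ℕ) {l : ℕ → ℕ} (hl : Antitone l) : StrictAnti (rhoShift N l) :=
  fun _ _ hij ↦ add_lt_add_of_le_of_lt (hl hij.le) (Fin.rev_lt_rev.2 hij)

/-- Fillings of the Young diagram `ν` with letters in `{0, …, N - 1}`. -/
abbrev Filling (N : ℕ) (ν : YoungDiagram) : Type :=
  ν.cells → Fin N

namespace Filling

variable {N : ℕ} {ν : YoungDiagram} {T : Filling N ν}

/-- The entry of `T` in the cell `(i, j)` as a natural number. Outside `ν` it is `N`, which exceeds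
every letter, so that rows remain weakly increasing. -/
def entry (T : Filling N ν) (i j : ℕ) : ℕ :=
  if h : (i, j) ∈ ν.cells then T ⟨(i, j), h⟩ else N

@[simp]
lemma entry_coe (c : ν.cells) : T.entry (c : ℕ × ℕ).1 (c : ℕ × ℕ).2 = T c := by
  simp [entry]

lemma entry_lt_iff {i j : ℕ} : T.entry i j < N ↔ (i, j) ∈ ν := by
  by_cases h : (i, j) ∈ ν <;> simp [entry, h]

lemma entry_le (i j : ℕ) : T.entry i j ≤ N := by
  by_cases h : (i, j) ∈ ν <;> simp [entry, h, Fin.is_le']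

lemma entry_eq_of_notMem {i j : ℕ} (h : (i, j) ∉ ν) : T.entry i j = N :=
  dif_neg h

lemma ext_entry {T' : Filling N ν} (h : ∀ i j, T.entry i j = T'.entry i j) : T = T' := by
  ext c
  rw [← entry_coe, h, entry_coe]

lemma isSemistandardOn_iff : IsSemistandardOn ν.cells T ↔
    (∀ i j, T.entry i j ≤ T.entry i (j + 1)) ∧
      ∀ i j, T.entry i j < N → T.entry i j < T.entry (i + 1) j := by
  constructor
  · refine fun hT ↦ ⟨fun i j ↦ ?_, fun i j h ↦ ?_⟩
    · by_cases h' : (i, j + 1) ∈ ν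
      · have h : (i, j) ∈ ν := ν.up_left_mem le_rfl j.le_succ h'
        simpa [entry, h, h'] using hT.1 i j h h'
      · exact (entry_le i j).trans_eq (entry_eq_of_notMem h').symm
    · by_cases h' : (i + 1, j) ∈ ν
      · have h : (i, j) ∈ ν := entry_lt_iff.1 h
        simpa [entry, h, h'] using hT.2 i j h h'
      · rwa [entry_eq_of_notMem h']
  · refine fun hT ↦ ⟨fun i j h h' ↦ ?_, fun i j h h' ↦ ?_⟩
    · simpa [entry, h, h'] using hT.1 i j
    · simpa [entry, h, h'] using hT.2 i j (entry_lt_iff.2 h)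

lemma entry_mono (hT : IsSemistandardOn ν.cells T) (i : ℕ) : Monotone (T.entry i) :=
  monotone_nat_of_le_succ ((isSemistandardOn_iff.1 hT).1 i)

lemma entry_lt_entry_succ (hT : IsSemistandardOn ν.cells T) {i j : ℕ} (h : T.entry i j < N) :
    T.entry i j < T.entry (i + 1) j :=
  (isSemistandardOn_iff.1 hT).2 i j h

lemma entry_lt_of_entry_succ_lt (hT : IsSemistandardOn ν.cells T) {k i j : ℕ} (hk : k < N)
    (h : T.entry (i + 1) j < k + 1) : T.entry i j < k := by
  by_contra! hle
  by_cases hN : T.entry i j < N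
  · have := entry_lt_entry_succ hT hN
    omega
  · have hmem : (i + 1, j) ∈ ν := entry_lt_iff.1 (h.trans_le hk)
    exact hN (entry_lt_iff.2 (ν.up_left_mem i.le_succ le_rfl hmem))

lemma isSemistandardOn_of_forall_lt
    (hrow : ∀ k i j, T.entry i (j + 1) < k → T.entry i j < k)
    (hcol : ∀ k < N, ∀ i j, T.entry (i + 1) j < k + 1 → T.entry i j < k) :
    IsSemistandardOn ν.cells T := by
  refine isSemistandardOn_iff.2 ⟨fun i j ↦ ?_, fun i j hN ↦ ?_⟩
  · exact Nat.lt_succ_iff.1 (hrow _ i j (Nat.lt_succ_self _))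
  · by_contra! hle
    exact (hcol _ hN i j (Nat.lt_succ_iff.2 hle)).false

lemma entry_mono_col (hT : IsSemistandardOn ν.cells T) (j : ℕ) :
    Monotone fun i ↦ T.entry i j := by
  refine monotone_nat_of_le_succ fun i ↦ ?_
  by_cases h : T.entry i j < N
  · exact (entry_lt_entry_succ hT h).le
  · have h' : (i + 1, j) ∉ ν := fun hmem ↦
      h (entry_lt_iff.2 (ν.up_left_mem i.le_succ le_rfl hmem))
    exact (entry_le i j).trans_eq (entry_eq_of_notMem h').symm

lemma entry_le_entry (hT : IsSemistandardOn ν.cells T) {i i' j j' : ℕ} (hi : i ≤ i')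
    (hj : j ≤ j') : T.entry i j ≤ T.entry i' j' :=
  (entry_mono_col hT j hi).trans (entry_mono hT i' hj)

lemma entry_lt_entry (hT : IsSemistandardOn ν.cells T) {i i' j : ℕ} (hi : i < i')
    (h : T.entry i j < N) : T.entry i j < T.entry i' j :=
  (entry_lt_entry_succ hT h).trans_le (entry_mono_col hT j hi)

lemma le_entry (hT : IsSemistandardOn ν.cells T) {i j : ℕ} (h : (i, j) ∈ ν) :
    i ≤ T.entry i j := by
  induction i with
  | zero => exact Nat.zero_le _
  | succ i ih =>
    have h' : (i, j) ∈ ν := ν.up_left_mem i.le_succ le_rfl h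
    exact (ih h').trans_lt (entry_lt_entry_succ hT (entry_lt_iff.2 h'))

section Content

open scoped Classical in
/-- The number of cells of `A` filled with the letter `k`. -/
noncomputable def content (T : Filling N ν) (A : Set (ℕ × ℕ)) (k : ℕ) : ℕ :=
  #{c : ν.cells | (c : ℕ × ℕ) ∈ A ∧ (T c : ℕ) = k}

lemma content_setOf (T : Filling N ν) (p : ℕ × ℕ → Prop) [DecidablePred p] (k : ℕ) :
    T.content {c | p c} k = #{c : ν.cells | p c ∧ (T c : ℕ) = k} := by
  unfold content
  congr!

lemma content_le_content {T' : Filling N ν} {A B : Set (ℕ × ℕ)} {k : ℕ}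
    (h : ∀ i j, (i, j) ∈ ν → (i, j) ∈ A → T.entry i j = k → (i, j) ∈ B ∧ T'.entry i j = k) :
    T.content A k ≤ T'.content B k := by
  classical
  refine card_le_card fun c hc ↦ ?_
  obtain ⟨hA, hk⟩ := (mem_filter_univ c).1 hc
  simpa using h _ _ c.2 hA (by rw [entry_coe, hk])

lemma content_congr {T' : Filling N ν} {A : Set (ℕ × ℕ)} {k : ℕ}
    (h : ∀ i j, (i, j) ∈ A → (T.entry i j = k ↔ T'.entry i j = k)) :
    T.content A k = T'.content A k :=
  (content_le_content fun i j _ hA hk ↦ ⟨hA, (h i j hA).1 hk⟩).antisymm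
    (content_le_content fun i j _ hA hk ↦ ⟨hA, (h i j hA).2 hk⟩)

lemma content_eq_zero {A : Set (ℕ × ℕ)} {k : ℕ}
    (h : ∀ i j, (i, j) ∈ ν → (i, j) ∈ A → T.entry i j ≠ k) : T.content A k = 0 := by
  classical
  refine card_eq_zero.2 (filter_eq_empty_iff.2 fun c _ hc ↦ h _ _ c.2 hc.1 ?_)
  rw [entry_coe, hc.2]

lemma entry_ne_of_content_eq_zero {A : Set (ℕ × ℕ)} {i j k : ℕ} (h : T.content A k = 0)
    (hmem : (i, j) ∈ ν) (hA : (i, j) ∈ A) : T.entry i j ≠ k := by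
  classical
  intro hk
  refine filter_eq_empty_iff.1 (card_eq_zero.1 h) (mem_univ ⟨(i, j), hmem⟩) ⟨hA, ?_⟩
  rw [← hk, ← entry_coe]

lemma content_le_eq_zero (T : Filling N ν) {J : ℕ} (hJ : ν.rowLen 0 ≤ J) (k : ℕ) :
    T.content {c | J ≤ c.2} k = 0 :=
  content_eq_zero fun i _ hmem hj _ ↦ ((ν.mem_iff_lt_rowLen.1 hmem).trans_le
    ((ν.rowLen_anti 0 i i.zero_le).trans hJ)).not_ge hj

lemma content_union (T : Filling N ν) {A B : Set (ℕ × ℕ)} (h : Disjoint A B) (k : ℕ) :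
    T.content (A ∪ B) k = T.content A k + T.content B k := by
  classical
  simp_rw [content, Set.mem_union, or_and_right, filter_or]
  exact card_union_of_disjoint
    (disjoint_filter.2 fun _ _ hA hB ↦ Set.disjoint_left.1 h hA.1 hB.1)

lemma content_lt_add_content_le (T : Filling N ν) (J k : ℕ) :
    T.content {c | c.2 < J} k + T.content {c | J ≤ c.2} k = T.content Set.univ k := by
  have hdisj : Disjoint {c : ℕ × ℕ | c.2 < J} {c | J ≤ c.2} :=
    Set.disjoint_left.2 fun c (h : c.2 < J) ↦ h.not_ge
  rw [← content_union T hdisj]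
  congr
  ext c
  simp [lt_or_ge]

lemma content_eq_add_content_succ_le (T : Filling N ν) (J k : ℕ) :
    T.content {c | c.2 = J} k + T.content {c | J + 1 ≤ c.2} k = T.content {c | J ≤ c.2} k := by
  have hdisj : Disjoint {c : ℕ × ℕ | c.2 = J} {c | J + 1 ≤ c.2} :=
    Set.disjoint_left.2 fun _ h ↦ (Nat.lt_succ_iff.2 h.le).not_ge
  rw [← content_union T hdisj]
  congr
  ext c
  simp only [Set.mem_union, Set.mem_ofPred_eq]
  omega

lemma content_le_one (hT : IsSemistandardOn ν.cells T) {A : Set (ℕ × ℕ)} {J : ℕ}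
    (hA : A ⊆ {c | c.2 = J}) (k : ℕ) : T.content A k ≤ 1 := by
  classical
  refine card_le_one.2 fun c hc c' hc' ↦ ?_
  obtain ⟨⟨i, j⟩, hmem⟩ := c
  obtain ⟨⟨i', j'⟩, hmem'⟩ := c'
  obtain ⟨-, hcA, hk⟩ := mem_filter.1 hc
  obtain ⟨-, hcA', hk'⟩ := mem_filter.1 hc'
  obtain rfl : j = J := hA hcA
  obtain rfl : j' = j := hA hcA'
  rw [← entry_coe] at hk hk'
  have hii' : i = i' := by
    rcases lt_trichotomy i i' with h | h | h
    · exact absurd (entry_lt_entry hT h (entry_lt_iff.2 hmem)) (by simp_all)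
    · exact h
    · exact absurd (entry_lt_entry hT h (entry_lt_iff.2 hmem')) (by simp_all)
  simp [hii']

lemma content_lt_le (hT : IsSemistandardOn ν.cells T) (J k : ℕ) :
    T.content {c | c.2 < J} k ≤ J := by
  induction J with
  | zero => simp [content]
  | succ J ih =>
    have h := content_lt_add_content_le T J k
    have h' := content_lt_add_content_le T (J + 1) k
    have h₁ := content_eq_add_content_succ_le T J k
    have h₂ := content_le_one hT (J := J) subset_rfl k
    omega

open scoped Classical in
lemma schurPoly_eq_sum (N : ℕ) (ν : YoungDiagram) :
    schurPoly N ν = ∑ T : Filling N ν with IsSemistandardOn ν.cells T,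
      ∏ i : Fin N, X i ^ content T Set.univ i := by
  refine sum_congr rfl fun T _ ↦ ?_
  rw [← prod_fiberwise' univ T X]
  refine prod_congr rfl fun i _ ↦ ?_
  simp [content, Fin.ext_iff]

end Content

section RowCount

/-- The number of entries smaller than `k` among the first `J` entries of row `i`. For fixed `J`
these numbers form the Gelfand–Tsetlin pattern of the first `J` columns of `T`. -/
def rowCount (T : Filling N ν) (J k i : ℕ) : ℕ :=
  #{j ∈ range J | T.entry i j < k}

variable {J : ℕ}

lemma lt_rowCount_iff (hT : IsSemistandardOn ν.cells T) {k i j : ℕ} :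
    j < T.rowCount J k i ↔ j < J ∧ T.entry i j < k := by
  refine ⟨fun h ↦ ?_, fun h ↦ ?_⟩
  · by_contra hj
    refine h.not_ge ((card_le_card fun j' hj' ↦ ?_).trans_eq (card_range j))
    have hj' := mem_filter.1 hj'
    by_contra hlt
    have hle : j ≤ j' := not_lt.1 (mt mem_range.2 hlt)
    exact hj ⟨hle.trans_lt (mem_range.1 hj'.1), (entry_mono hT i hle).trans_lt hj'.2⟩
  · rw [Nat.lt_iff_add_one_le, ← card_range (j + 1)]
    refine card_le_card fun j' hj' ↦ ?_
    have hle : j' ≤ j := Nat.lt_succ_iff.1 (mem_range.1 hj')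
    exact mem_filter.2 ⟨mem_range.2 (hle.trans_lt h.1), (entry_mono hT i hle).trans_lt h.2⟩

lemma rowCount_mono (T : Filling N ν) (J i : ℕ) : Monotone fun k ↦ T.rowCount J k i :=
  fun _ _ hk ↦ card_le_card (monotone_filter_right _ fun _ _ h ↦ h.trans_le hk)

lemma rowCount_succ_le_rowCount (hT : IsSemistandardOn ν.cells T) {k : ℕ} (hk : k < N) (i : ℕ) :
    T.rowCount J (k + 1) (i + 1) ≤ T.rowCount J k i :=
  card_le_card (monotone_filter_right _ fun _ _ h ↦ entry_lt_of_entry_succ_lt hT hk h)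

lemma rowCount_eq_zero {k i : ℕ} (hk : k ≤ N) (hi : ν.colLen 0 ≤ i) : T.rowCount J k i = 0 := by
  refine card_eq_zero.2 (filter_eq_empty_iff.2 fun j _ h ↦ hi.not_gt ?_)
  exact (ν.mem_iff_lt_colLen.1 (entry_lt_iff.1 (h.trans_le hk))).trans_le
    (ν.colLen_anti _ _ j.zero_le)

lemma content_eq_sum_rows (T : Filling N ν) (J : ℕ) {k : ℕ} (hk : k < N) :
    T.content {c | c.2 < J} k = ∑ i ∈ range (ν.colLen 0), #{j ∈ range J | T.entry i j = k} := by
  have hmem {i j : ℕ} (h : T.entry i j = k) : (i, j) ∈ ν := entry_lt_iff.1 (h.trans_lt hk)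
  rw [← card_sigma, content_setOf]
  refine card_bij' (fun c _ ↦ ⟨(c : ℕ × ℕ).1, (c : ℕ × ℕ).2⟩)
    (fun p hp ↦ ⟨(p.1, p.2), hmem (mem_filter.1 (mem_sigma.1 hp).2).2⟩) ?_ ?_ ?_ ?_
  · intro c hc
    have hrow : (c : ℕ × ℕ).1 < ν.colLen 0 :=
      (ν.mem_iff_lt_colLen.1 c.2).trans_le (ν.colLen_anti _ _ (Nat.zero_le _))
    simpa [hrow] using hc
  · rintro ⟨i, j⟩ hp
    have hp := mem_filter.1 (mem_sigma.1 hp).2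
    simpa [entry, hmem hp.2] using hp
  · simp
  · simp

lemma content_add_sum_rowCount (T : Filling N ν) (J : ℕ) {k : ℕ} (hk : k < N) :
    T.content {c | c.2 < J} k + ∑ i ∈ range (ν.colLen 0), T.rowCount J k i =
      ∑ i ∈ range (ν.colLen 0), T.rowCount J (k + 1) i := by
  rw [content_eq_sum_rows T J hk, ← sum_add_distrib]
  refine sum_congr rfl fun i _ ↦ ?_
  rw [rowCount, rowCount, ← card_union_of_disjoint, ← filter_or]
  · simp_rw [Nat.lt_succ_iff_lt_or_eq, or_comm]
  · exact disjoint_filter.2 fun j _ h ↦ h.not_lt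

end RowCount

section BenderKnuth

/-- The least value that `T.rowCount J (k + 1) i` can take when the other row counts are fixed. -/
def bkLower (T : Filling N ν) (J k i : ℕ) : ℕ :=
  max (T.rowCount J (k + 2) (i + 1)) (T.rowCount J k i)

/-- The greatest value that `T.rowCount J (k + 1) i` can take when the other row counts are
fixed. -/
def bkUpper (T : Filling N ν) (J k : ℕ) : ℕ → ℕ
  | 0 => T.rowCount J (k + 2) 0
  | i + 1 => min (T.rowCount J (k + 2) (i + 1)) (T.rowCount J k i)

/-- The reflection of `T.rowCount J (k + 1) i` in the interval
`[T.bkLower J k i, T.bkUpper J k i]`. -/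
def bkCount (T : Filling N ν) (J k i : ℕ) : ℕ :=
  T.bkLower J k i + T.bkUpper J k i - T.rowCount J (k + 1) i

/-- The Bender–Knuth involution for the letters `k` and `k + 1`, applied to the first `J` columns
only. On Gelfand–Tsetlin patterns it replaces `T.rowCount J (k + 1) i` by `T.bkCount J k i`. -/
def benderKnuth (T : Filling N ν) (J : ℕ) {k : ℕ} (hk : k + 1 < N) : Filling N ν := fun c ↦
  if T.rowCount J k (c : ℕ × ℕ).1 ≤ (c : ℕ × ℕ).2 ∧
      (c : ℕ × ℕ).2 < T.rowCount J (k + 2) (c : ℕ × ℕ).1 then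
    if (c : ℕ × ℕ).2 < T.bkCount J k (c : ℕ × ℕ).1 then ⟨k, k.lt_succ_self.trans hk⟩
    else ⟨k + 1, hk⟩
  else T c

variable {J k : ℕ}

lemma bkUpper_le (T : Filling N ν) (J k i : ℕ) : T.bkUpper J k i ≤ T.rowCount J (k + 2) i := by
  cases i with
  | zero => exact le_rfl
  | succ i => exact min_le_left _ _

lemma bkLower_le_rowCount (hT : IsSemistandardOn ν.cells T) (hk : k + 1 < N) (i : ℕ) :
    T.bkLower J k i ≤ T.rowCount J (k + 1) i :=
  max_le (rowCount_succ_le_rowCount hT hk i) (rowCount_mono T J i k.le_succ)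

lemma rowCount_le_bkUpper (hT : IsSemistandardOn ν.cells T) (hk : k + 1 < N) (i : ℕ) :
    T.rowCount J (k + 1) i ≤ T.bkUpper J k i := by
  cases i with
  | zero => exact rowCount_mono T J 0 (k + 1).le_succ
  | succ i =>
    exact le_min (rowCount_mono T J (i + 1) (k + 1).le_succ)
      (rowCount_succ_le_rowCount hT (k.lt_succ_self.trans hk) i)

lemma bkCount_add_rowCount (hT : IsSemistandardOn ν.cells T) (hk : k + 1 < N) (i : ℕ) :
    T.bkCount J k i + T.rowCount J (k + 1) i = T.bkLower J k i + T.bkUpper J k i :=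
  Nat.sub_add_cancel ((rowCount_le_bkUpper hT hk i).trans (Nat.le_add_left _ _))

lemma bkLower_le_bkCount (hT : IsSemistandardOn ν.cells T) (hk : k + 1 < N) (i : ℕ) :
    T.bkLower J k i ≤ T.bkCount J k i := by
  have h₁ := bkCount_add_rowCount (J := J) hT hk i
  have h₂ := rowCount_le_bkUpper (J := J) hT hk i
  omega

lemma bkCount_le_bkUpper (hT : IsSemistandardOn ν.cells T) (hk : k + 1 < N) (i : ℕ) :
    T.bkCount J k i ≤ T.bkUpper J k i := by
  have h₁ := bkCount_add_rowCount (J := J) hT hk i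
  have h₂ := bkLower_le_rowCount (J := J) hT hk i
  omega

lemma entry_benderKnuth (hT : IsSemistandardOn ν.cells T) (hk : k + 1 < N) (i j : ℕ) :
    (T.benderKnuth J hk).entry i j =
      if T.rowCount J k i ≤ j ∧ j < T.rowCount J (k + 2) i then
        if j < T.bkCount J k i then k else k + 1
      else T.entry i j := by
  by_cases h : (i, j) ∈ ν
  · simp only [entry, benderKnuth, YoungDiagram.mem_cells, h, dif_pos]
    split_ifs <;> rfl
  · have hj : ¬j < T.rowCount J (k + 2) i := fun hlt ↦
      h (entry_lt_iff.1 (((lt_rowCount_iff hT).1 hlt).2.trans_le hk))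
    simp [entry_eq_of_notMem h, hj]

lemma entry_benderKnuth_of_le (hT : IsSemistandardOn ν.cells T) (hk : k + 1 < N) {i j : ℕ}
    (hj : J ≤ j) : (T.benderKnuth J hk).entry i j = T.entry i j := by
  rw [entry_benderKnuth hT, if_neg]
  exact fun h ↦ hj.not_gt ((lt_rowCount_iff hT).1 h.2).1

lemma entry_benderKnuth_lt_iff (hT : IsSemistandardOn ν.cells T) (hk : k + 1 < N) {m i j : ℕ}
    (hm : m ≠ k + 1) : (T.benderKnuth J hk).entry i j < m ↔ T.entry i j < m := by
  rw [entry_benderKnuth hT]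
  split_ifs with h
  on_goal 3 => rfl
  all_goals
    have hlo := mt (lt_rowCount_iff hT).2 h.1.not_gt
    have hhi := (lt_rowCount_iff hT).1 h.2
    omega

lemma entry_benderKnuth_lt_succ_iff (hT : IsSemistandardOn ν.cells T) (hk : k + 1 < N) {i j : ℕ}
    (hj : j < J) : (T.benderKnuth J hk).entry i j < k + 1 ↔ j < T.bkCount J k i := by
  have hlo : T.rowCount J k i ≤ T.bkCount J k i :=
    (le_max_right _ _).trans (bkLower_le_bkCount hT hk i)
  have hhi := (bkCount_le_bkUpper (J := J) hT hk i).trans (bkUpper_le T J k i)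
  have h₀ := lt_rowCount_iff (J := J) hT (k := k) (i := i) (j := j)
  have h₂ := lt_rowCount_iff (J := J) hT (k := k + 2) (i := i) (j := j)
  rw [entry_benderKnuth hT]
  split_ifs <;> omega

lemma entry_benderKnuth_lt_of_entry_col_succ_lt (hT : IsSemistandardOn ν.cells T)
    (hk : k + 1 < N) (hJ : ∀ i, T.entry i J ≠ k) {m i j : ℕ}
    (h : (T.benderKnuth J hk).entry i (j + 1) < m) : (T.benderKnuth J hk).entry i j < m := by
  by_cases hm : m = k + 1
  · subst hm
    rcases lt_trichotomy (j + 1) J with hj | rfl | hj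
    · rw [entry_benderKnuth_lt_succ_iff hT hk hj] at h
      exact (entry_benderKnuth_lt_succ_iff hT hk (j.lt_succ_self.trans hj)).2
        (j.lt_succ_self.trans h)
    · rw [entry_benderKnuth_of_le hT hk le_rfl] at h
      have hlt : T.entry i j < k :=
        (entry_mono hT i j.le_succ).trans_lt ((Nat.lt_succ_iff.1 h).lt_of_ne (hJ i))
      exact (entry_benderKnuth_lt_succ_iff hT hk j.lt_succ_self).2
        (((lt_rowCount_iff hT).2 ⟨j.lt_succ_self, hlt⟩).trans_le
          ((le_max_right _ _).trans (bkLower_le_bkCount hT hk i)))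
    · rw [entry_benderKnuth_of_le hT hk hj.le] at h
      rw [entry_benderKnuth_of_le hT hk (Nat.lt_succ_iff.1 hj)]
      exact (entry_mono hT i j.le_succ).trans_lt h
  · rw [entry_benderKnuth_lt_iff hT hk hm] at h ⊢
    exact (entry_mono hT i j.le_succ).trans_lt h

lemma entry_benderKnuth_lt_of_entry_row_succ_lt (hT : IsSemistandardOn ν.cells T)
    (hk : k + 1 < N) {m i j : ℕ} (hm : m < N)
    (h : (T.benderKnuth J hk).entry (i + 1) j < m + 1) : (T.benderKnuth J hk).entry i j < m := by
  rcases le_or_gt J j with hj | hj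
  · rw [entry_benderKnuth_of_le hT hk hj] at h ⊢
    exact entry_lt_of_entry_succ_lt hT hm h
  by_cases hmk : m = k
  · subst hmk
    rw [entry_benderKnuth_lt_succ_iff hT hk hj] at h
    have hle := (bkCount_le_bkUpper (J := J) hT hk (i + 1)).trans (min_le_right _ _)
    exact (entry_benderKnuth_lt_iff hT hk (by omega)).2
      ((lt_rowCount_iff hT).1 (h.trans_le hle)).2
  by_cases hmk' : m = k + 1
  · subst hmk'
    rw [entry_benderKnuth_lt_iff hT hk (by omega)] at h
    exact (entry_benderKnuth_lt_succ_iff hT hk hj).2 (((lt_rowCount_iff hT).2 ⟨hj, h⟩).trans_le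
      ((le_max_left _ _).trans (bkLower_le_bkCount hT hk i)))
  · rw [entry_benderKnuth_lt_iff hT hk (by omega)] at h ⊢
    exact entry_lt_of_entry_succ_lt hT hm h

lemma isSemistandardOn_benderKnuth (hT : IsSemistandardOn ν.cells T) (hk : k + 1 < N)
    (hJ : ∀ i, T.entry i J ≠ k) : IsSemistandardOn ν.cells (T.benderKnuth J hk) :=
  isSemistandardOn_of_forall_lt
    (fun _ _ _ ↦ entry_benderKnuth_lt_of_entry_col_succ_lt hT hk hJ)
    fun _ hm _ _ ↦ entry_benderKnuth_lt_of_entry_row_succ_lt hT hk hm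

lemma rowCount_benderKnuth (hT : IsSemistandardOn ν.cells T) (hk : k + 1 < N) {m : ℕ}
    (hm : m ≠ k + 1) (i : ℕ) : (T.benderKnuth J hk).rowCount J m i = T.rowCount J m i := by
  simp only [rowCount, entry_benderKnuth_lt_iff hT hk hm]

lemma rowCount_benderKnuth_succ (hT : IsSemistandardOn ν.cells T) (hk : k + 1 < N) (i : ℕ) :
    (T.benderKnuth J hk).rowCount J (k + 1) i = T.bkCount J k i := by
  rw [rowCount, ← card_range (T.bkCount J k i)]
  congr 1
  ext j
  rw [mem_filter, mem_range, mem_range]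
  refine ⟨fun h ↦ (entry_benderKnuth_lt_succ_iff hT hk h.1).1 h.2, fun h ↦ ?_⟩
  have hj : j < J := ((lt_rowCount_iff hT).1 (h.trans_le
    ((bkCount_le_bkUpper hT hk i).trans (bkUpper_le T J k i)))).1
  exact ⟨hj, (entry_benderKnuth_lt_succ_iff hT hk hj).2 h⟩

lemma bkCount_benderKnuth (hT : IsSemistandardOn ν.cells T) (hk : k + 1 < N) (i : ℕ) :
    (T.benderKnuth J hk).bkCount J k i = T.rowCount J (k + 1) i := by
  have h : (T.benderKnuth J hk).bkUpper J k i = T.bkUpper J k i := by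
    cases i <;> simp [bkUpper, rowCount_benderKnuth hT hk]
  rw [bkCount, rowCount_benderKnuth_succ hT hk, h, bkLower, rowCount_benderKnuth hT hk (by omega),
    rowCount_benderKnuth hT hk (by omega)]
  exact Nat.sub_eq_of_eq_add' (bkCount_add_rowCount hT hk i).symm

lemma benderKnuth_benderKnuth (hT : IsSemistandardOn ν.cells T) (hk : k + 1 < N)
    (hJ : ∀ i, T.entry i J ≠ k) : (T.benderKnuth J hk).benderKnuth J hk = T := by
  have hT' := isSemistandardOn_benderKnuth hT hk hJ
  refine ext_entry fun i j ↦ eq_of_forall_gt_iff fun m ↦ ?_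
  by_cases hj : j < J
  · by_cases hm : m = k + 1
    · rw [hm, entry_benderKnuth_lt_succ_iff hT' hk hj, bkCount_benderKnuth hT hk,
        lt_rowCount_iff hT, and_iff_right hj]
    · rw [entry_benderKnuth_lt_iff hT' hk hm, entry_benderKnuth_lt_iff hT hk hm]
  · rw [entry_benderKnuth_of_le hT' hk (not_lt.1 hj), entry_benderKnuth_of_le hT hk (not_lt.1 hj)]

lemma sum_bkLower_add_bkUpper (T : Filling N ν) (J k n : ℕ) :
    ∑ i ∈ range n, (T.bkLower J k i + T.bkUpper J k i) + T.bkUpper J k n =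
      ∑ i ∈ range n, (T.rowCount J k i + T.rowCount J (k + 2) i) + T.rowCount J (k + 2) n := by
  induction n with
  | zero => simp [bkUpper]
  | succ n ih =>
    have h : T.bkLower J k n + T.bkUpper J k (n + 1) =
        T.rowCount J (k + 2) (n + 1) + T.rowCount J k n := max_add_min _ _
    rw [sum_range_succ, sum_range_succ]
    omega

lemma sum_bkCount_add_sum_rowCount (hT : IsSemistandardOn ν.cells T) (hk : k + 1 < N) :
    ∑ i ∈ range (ν.colLen 0), T.bkCount J k i + ∑ i ∈ range (ν.colLen 0), T.rowCount J (k + 1) i =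
      ∑ i ∈ range (ν.colLen 0), T.rowCount J k i +
        ∑ i ∈ range (ν.colLen 0), T.rowCount J (k + 2) i := by
  have h := sum_bkLower_add_bkUpper T J k (ν.colLen 0)
  have h₀ : T.rowCount J (k + 2) (ν.colLen 0) = 0 := rowCount_eq_zero hk le_rfl
  have h₁ := (bkUpper_le T J k (ν.colLen 0)).trans_eq h₀
  rw [← sum_add_distrib, ← sum_add_distrib, sum_congr rfl fun i _ ↦ bkCount_add_rowCount hT hk i]
  omega

lemma content_benderKnuth_left (hT : IsSemistandardOn ν.cells T) (hk : k + 1 < N) :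
    (T.benderKnuth J hk).content {c | c.2 < J} k = T.content {c | c.2 < J} (k + 1) := by
  have h := content_add_sum_rowCount (T.benderKnuth J hk) J (k.lt_succ_self.trans hk)
  simp only [rowCount_benderKnuth hT hk k.lt_succ_self.ne, rowCount_benderKnuth_succ hT hk] at h
  have h₁ := content_add_sum_rowCount T J hk
  simp only [add_assoc k, Nat.reduceAdd] at h₁
  have h₂ := sum_bkCount_add_sum_rowCount (J := J) hT hk
  omega

lemma content_benderKnuth_right (hT : IsSemistandardOn ν.cells T) (hk : k + 1 < N) :
    (T.benderKnuth J hk).content {c | c.2 < J} (k + 1) = T.content {c | c.2 < J} k := by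
  have h := content_add_sum_rowCount (T.benderKnuth J hk) J hk
  simp only [add_assoc k, Nat.reduceAdd, rowCount_benderKnuth hT hk (m := k + 2) (by omega),
    rowCount_benderKnuth_succ hT hk] at h
  have h₁ := content_add_sum_rowCount T J (k.lt_succ_self.trans hk)
  have h₂ := sum_bkCount_add_sum_rowCount (J := J) hT hk
  omega

lemma content_benderKnuth_of_le (hT : IsSemistandardOn ν.cells T) (hk : k + 1 < N) {J' : ℕ}
    (hJ : J ≤ J') (m : ℕ) :
    (T.benderKnuth J hk).content {c | J' ≤ c.2} m = T.content {c | J' ≤ c.2} m :=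
  content_congr fun i _ hj ↦ by rw [entry_benderKnuth_of_le hT hk (hJ.trans hj)]

lemma content_benderKnuth_of_ne (hT : IsSemistandardOn ν.cells T) (hk : k + 1 < N) {m : ℕ}
    (hm : m ≠ k) (hm' : m ≠ k + 1) (A : Set (ℕ × ℕ)) :
    (T.benderKnuth J hk).content A m = T.content A m := by
  refine content_congr fun i j _ ↦ ?_
  have h := entry_benderKnuth_lt_iff (J := J) hT hk hm' (i := i) (j := j)
  have h' := entry_benderKnuth_lt_iff (J := J) hT hk (m := m + 1) (i := i) (j := j) (by omega)
  omega

lemma content_univ_benderKnuth_eq_comp_swap (hT : IsSemistandardOn ν.cells T) (hk : k + 1 < N)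
    (hJ : ν.rowLen 0 ≤ J) :
    (fun i : Fin N ↦ (T.benderKnuth J hk).content Set.univ i) =
      (fun i : Fin N ↦ T.content Set.univ i) ∘
        Equiv.swap ⟨k, k.lt_succ_self.trans hk⟩ ⟨k + 1, hk⟩ := by
  have hlt (m : ℕ) (T' : Filling N ν) : T'.content Set.univ m = T'.content {c | c.2 < J} m := by
    rw [← content_lt_add_content_le T' J m, content_le_eq_zero T' hJ, add_zero]
  refine eq_comp_swap ?_ ?_ fun i hi hi' ↦ ?_
  · simp only [hlt, content_benderKnuth_left hT hk]
  · simp only [hlt, content_benderKnuth_right hT hk]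
  · exact content_benderKnuth_of_ne hT hk (fun h ↦ hi (Fin.ext h)) (fun h ↦ hi' (Fin.ext h)) _

lemma schurPoly_isSymmetric (N : ℕ) (ν : YoungDiagram) : (schurPoly N ν).IsSymmetric := by
  classical
  refine isSymmetric_of_rename_swap_adjacent fun k hk ↦ ?_
  have hJ (T : Filling N ν) (i : ℕ) : T.entry i (ν.rowLen 0) ≠ k := by
    rw [entry_eq_of_notMem]
    · omega
    · exact fun h ↦ (ν.mem_iff_lt_rowLen.1 h).not_ge (ν.rowLen_anti 0 i i.zero_le)
  rw [schurPoly_eq_sum, map_sum]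
  refine sum_bij' (fun T _ ↦ benderKnuth T (ν.rowLen 0) hk)
    (fun T _ ↦ benderKnuth T (ν.rowLen 0) hk) ?_ ?_ ?_ ?_ ?_
  all_goals intro T hT; rw [mem_filter_univ] at hT
  iterate 2 exact (mem_filter_univ _).2 (isSemistandardOn_benderKnuth hT hk (hJ T))
  iterate 2 exact benderKnuth_benderKnuth hT hk (hJ T)
  · rw [map_prod, ← Equiv.prod_comp (Equiv.swap ⟨k, k.lt_succ_self.trans hk⟩ ⟨k + 1, hk⟩)]
    refine prod_congr rfl fun i _ ↦ ?_
    rw [map_pow, rename_X, Equiv.swap_apply_self]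
    exact congrArg _ (congrFun (content_univ_benderKnuth_eq_comp_swap hT hk le_rfl) i).symm

end BenderKnuth

section LittlewoodRichardson

variable {μ : ℕ → ℕ} {J k : ℕ}

/-- `T` is a Littlewood–Richardson tableau relative to `μ`: for every `J`, the sum of `μ` and the
content of the columns `≥ J` of `T` is weakly decreasing. -/
def IsLittlewoodRichardson (μ : ℕ → ℕ) (T : Filling N ν) : Prop :=
  IsSemistandardOn ν.cells T ∧ ∀ J k, k + 1 < N →
    μ (k + 1) + T.content {c | J ≤ c.2} (k + 1) ≤ μ k + T.content {c | J ≤ c.2} k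

/-- The columns `≥ J` of `T` and the letters `k`, `k + 1` violate the Littlewood–Richardson
condition relative to `μ`. -/
def IsViolation (μ : ℕ → ℕ) (T : Filling N ν) (J k : ℕ) : Prop :=
  k + 1 < N ∧ μ k + T.content {c | J ≤ c.2} k < μ (k + 1) + T.content {c | J ≤ c.2} (k + 1)

/-- `(J, k)` is the violation of the Littlewood–Richardson condition that is found first when the
columns are read from right to left; ties are broken in favour of small letters. -/
structure IsFirstViolation (μ : ℕ → ℕ) (T : Filling N ν) (J k : ℕ) : Prop where
  isViolation : IsViolation μ T J k
  not_isViolation_of_gt : ∀ J' > J, ∀ k', ¬IsViolation μ T J' k'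
  not_isViolation_of_lt : ∀ k' < k, ¬IsViolation μ T J k'

lemma IsFirstViolation.unique {J' k' : ℕ} (h : IsFirstViolation μ T J k)
    (h' : IsFirstViolation μ T J' k') : J = J' ∧ k = k' := by
  obtain rfl : J = J' := le_antisymm
    (not_lt.1 fun hlt ↦ h'.not_isViolation_of_gt J hlt k h.isViolation)
    (not_lt.1 fun hlt ↦ h.not_isViolation_of_gt J' hlt k' h'.isViolation)
  exact ⟨rfl, le_antisymm (not_lt.1 fun hlt ↦ h.not_isViolation_of_lt k' hlt h'.isViolation)
    (not_lt.1 fun hlt ↦ h'.not_isViolation_of_lt k hlt h.isViolation)⟩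

lemma not_isViolation_of_rowLen_le (hμ : Antitone μ) (hJ : ν.rowLen 0 ≤ J) :
    ¬IsViolation μ T J k := by
  have hzero (m : ℕ) : T.content {c | J ≤ c.2} m = 0 := content_le_eq_zero T hJ m
  rintro ⟨-, h⟩
  rw [hzero, hzero] at h
  exact h.not_ge (hμ k.le_succ)

lemma exists_isFirstViolation (hμ : Antitone μ) (hT : IsSemistandardOn ν.cells T)
    (hLR : ¬IsLittlewoodRichardson μ T) : ∃ J k, IsFirstViolation μ T J k := by
  classical
  have hne : {J | ∃ k, IsViolation μ T J k}.Nonempty := by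
    by_contra hempty
    exact hLR ⟨hT, fun J k hk ↦ not_lt.1 fun hlt ↦ hempty ⟨J, k, hk, hlt⟩⟩
  have hbdd : BddAbove {J | ∃ k, IsViolation μ T J k} := ⟨ν.rowLen 0, fun J ⟨_, hk⟩ ↦
    not_lt.1 fun hlt ↦ not_isViolation_of_rowLen_le hμ hlt.le hk⟩
  have hex := Nat.sSup_mem hne hbdd
  exact ⟨_, Nat.find hex, Nat.find_spec hex,
    fun J' hJ' k' hk' ↦ hJ'.not_ge (le_csSup hbdd ⟨k', hk'⟩), fun k' hk' ↦ Nat.find_min hex hk'⟩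

lemma IsFirstViolation.content_eq (hT : IsSemistandardOn ν.cells T)
    (h : IsFirstViolation μ T J k) : T.content {c | c.2 = J} k = 0 ∧
      μ k + T.content {c | J ≤ c.2} k + 1 = μ (k + 1) + T.content {c | J ≤ c.2} (k + 1) := by
  obtain ⟨hk, hlt⟩ := h.isViolation
  have hle : μ (k + 1) + T.content {c | J + 1 ≤ c.2} (k + 1) ≤
      μ k + T.content {c | J + 1 ≤ c.2} k :=
    not_lt.1 fun hlt ↦ h.not_isViolation_of_gt (J + 1) J.lt_succ_self k ⟨hk, hlt⟩
  have h₀ := content_eq_add_content_succ_le T J k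
  have h₁ := content_eq_add_content_succ_le T J (k + 1)
  have hone := content_le_one hT (J := J) subset_rfl (k + 1)
  omega

lemma IsFirstViolation.entry_ne (hT : IsSemistandardOn ν.cells T)
    (h : IsFirstViolation μ T J k) (i : ℕ) : T.entry i J ≠ k := by
  intro hi
  have hmem : (i, J) ∈ ν := entry_lt_iff.1 (hi.trans_lt (k.lt_succ_self.trans h.isViolation.1))
  exact entry_ne_of_content_eq_zero (h.content_eq hT).1 hmem rfl hi

lemma IsFirstViolation.benderKnuth (hT : IsSemistandardOn ν.cells T)
    (h : IsFirstViolation μ T J k) :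
    IsFirstViolation μ (T.benderKnuth J h.isViolation.1) J k := by
  have hiff {J' k' : ℕ} (hJ : J ≤ J') :
      IsViolation μ (T.benderKnuth J h.isViolation.1) J' k' ↔ IsViolation μ T J' k' := by
    rw [IsViolation, content_benderKnuth_of_le hT _ hJ, content_benderKnuth_of_le hT _ hJ,
      IsViolation]
  exact ⟨(hiff le_rfl).2 h.isViolation,
    fun J' hJ' k' ↦ mt (hiff hJ'.le).1 (h.not_isViolation_of_gt J' hJ' k'),
    fun k' hk' ↦ mt (hiff le_rfl).1 (h.not_isViolation_of_lt k' hk')⟩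

lemma IsFirstViolation.benderKnuth_benderKnuth {J' k' : ℕ} (hT : IsSemistandardOn ν.cells T)
    (h : IsFirstViolation μ T J k)
    (h' : IsFirstViolation μ (T.benderKnuth J h.isViolation.1) J' k') :
    (T.benderKnuth J h.isViolation.1).benderKnuth J' h'.isViolation.1 = T := by
  obtain ⟨rfl, rfl⟩ := (h.benderKnuth hT).unique h'
  exact Filling.benderKnuth_benderKnuth hT _ (h.entry_ne hT)

lemma IsFirstViolation.not_isLittlewoodRichardson (h : IsFirstViolation μ T J k) :
    ¬IsLittlewoodRichardson μ T :=
  fun hT ↦ h.isViolation.2.not_ge (hT.2 J k h.isViolation.1)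

lemma IsFirstViolation.alternant_benderKnuth (hT : IsSemistandardOn ν.cells T)
    (h : IsFirstViolation μ T J k) :
    alternant ℤ (rhoShift N (μ + (T.benderKnuth J h.isViolation.1).content Set.univ)) =
      -alternant ℤ (rhoShift N (μ + T.content Set.univ)) := by
  have hk := h.isViolation.1
  rw [← alternant_comp_swap (i := ⟨k, k.lt_succ_self.trans hk⟩) (j := ⟨k + 1, hk⟩) _ (by simp)]
  congr 1
  have heq := (h.content_eq hT).2
  have hge (m : ℕ) := content_benderKnuth_of_le hT hk le_rfl (J := J) m
  have hlt := content_benderKnuth_left hT hk (J := J)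
  have hlt' := content_benderKnuth_right hT hk (J := J)
  refine eq_comp_swap ?_ ?_ fun i hi hi' ↦ ?_
  · simp only [rhoShift, Pi.add_apply, ← content_lt_add_content_le _ J, hge, hlt, Fin.val_rev]
    omega
  · simp only [rhoShift, Pi.add_apply, ← content_lt_add_content_le _ J, hge, hlt', Fin.val_rev]
    omega
  · simp only [rhoShift, Pi.add_apply]
    rw [content_benderKnuth_of_ne hT hk (fun h ↦ hi (Fin.ext h)) fun h ↦ hi' (Fin.ext h)]

open scoped Classical in
lemma sum_alternant_not_isLittlewoodRichardson (N : ℕ) (ν : YoungDiagram) (hμ : Antitone μ) :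
    ∑ T : Filling N ν with IsSemistandardOn ν.cells T ∧ ¬IsLittlewoodRichardson μ T,
      alternant ℤ (rhoShift N (μ + content T Set.univ)) = 0 := by
  let S : Finset (Filling N ν) := {T | IsSemistandardOn ν.cells T ∧ ¬IsLittlewoodRichardson μ T}
  change ∑ T ∈ S, _ = 0
  have hex (T) (hT : T ∈ S) : IsSemistandardOn ν.cells T ∧ ∃ J k, IsFirstViolation μ T J k := by
    obtain ⟨hsemi, hLR⟩ := (mem_filter_univ T).1 hT
    exact ⟨hsemi, exists_isFirstViolation hμ hsemi hLR⟩
  choose! hsemi J k hJk using hex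
  have hmem (T) (hT : T ∈ S) : benderKnuth T (J T) (hJk T hT).isViolation.1 ∈ S :=
    (mem_filter_univ _).2
      ⟨isSemistandardOn_benderKnuth (hsemi T hT) _ ((hJk T hT).entry_ne (hsemi T hT)),
        ((hJk T hT).benderKnuth (hsemi T hT)).not_isLittlewoodRichardson⟩
  refine sum_involution (fun T hT ↦ benderKnuth T (J T) (hJk T hT).isViolation.1) ?_ ?_ hmem
    fun T hT ↦ (hJk T hT).benderKnuth_benderKnuth (hsemi T hT) (hJk _ (hmem T hT))
  · intro T hT
    rw [(hJk T hT).alternant_benderKnuth (hsemi T hT), add_neg_cancel]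
  · intro T hT hne heq
    have h := (hJk T hT).alternant_benderKnuth (hsemi T hT)
    rw [heq] at h
    exact hne (self_eq_neg.1 h)

open scoped Classical in
/-- Stembridge's form of the Littlewood–Richardson rule. -/
theorem alternant_mul_schurPoly (N : ℕ) (ν : YoungDiagram) (hμ : Antitone μ) :
    alternant ℤ (rhoShift N μ) * schurPoly N ν =
      ∑ T : Filling N ν with IsLittlewoodRichardson μ T,
        alternant ℤ (rhoShift N (μ + content T Set.univ)) := by
  have hsymm := schurPoly_isSymmetric N ν
  have hshift (T : Filling N ν) : rhoShift N μ + (fun i : Fin N ↦ T.content Set.univ i) =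
      rhoShift N (μ + T.content Set.univ) := by
    ext i
    simp only [rhoShift, Pi.add_apply]
    omega
  rw [schurPoly_eq_sum] at hsymm ⊢
  rw [alternant_mul_sum_of_isSymmetric hsymm]
  simp only [hshift]
  rw [← sum_filter_add_sum_filter_not _ (IsLittlewoodRichardson μ), filter_filter, filter_filter,
    sum_alternant_not_isLittlewoodRichardson N ν hμ, add_zero]
  congr! 2 with T
  exact and_iff_right_of_imp And.left

namespace IsLittlewoodRichardson

lemma antitone_add_content (hμ : Antitone μ) (hT : IsLittlewoodRichardson μ T) :
    Antitone (μ + T.content Set.univ) := by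
  refine antitone_nat_of_succ_le fun k ↦ ?_
  by_cases hk : k + 1 < N
  · simpa using hT.2 0 k hk
  · have hzero : T.content Set.univ (k + 1) = 0 :=
      content_eq_zero fun i j hmem _ h ↦ hk (h ▸ entry_lt_iff.2 hmem)
    rw [Pi.add_apply, hzero]
    exact (hμ k.le_succ).trans (Nat.le_add_right _ _)

lemma add_content_succ_le (hμ : Antitone μ) (hT : IsLittlewoodRichardson μ T) (hk : k + 1 < N)
    (i J : ℕ) : μ (k + 1) + T.content {c | c.1 < i + 1 ∧ J ≤ c.2} (k + 1) ≤
      μ k + T.content {c | c.1 < i ∧ J ≤ c.2} k := by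
  classical
  -- Apply the defining inequality to the leftmost column `≥ J` in which `k + 1` occurs in a row
  -- `< i + 1`: in the columns from there on, every `k` lies in a row `< i`.
  by_cases hex : ∃ j, J ≤ j ∧ ∃ i' < i + 1, T.entry i' j = k + 1
  · obtain ⟨hJ, i', hi', hentry⟩ := Nat.find_spec hex
    set j := Nat.find hex
    have hleft : T.content {c | c.1 < i + 1 ∧ J ≤ c.2} (k + 1) ≤
        T.content {c | j ≤ c.2} (k + 1) :=
      content_le_content fun i₁ j₁ _ hc h ↦ ⟨Nat.find_min' hex ⟨hc.2, i₁, hc.1, h⟩, h⟩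
    have hright : T.content {c | j ≤ c.2} k ≤ T.content {c | c.1 < i ∧ J ≤ c.2} k := by
      refine content_le_content fun i₁ j₁ _ (hj₁ : j ≤ j₁) h ↦ ⟨⟨?_, hJ.trans hj₁⟩, h⟩
      by_contra! hi
      have hle := entry_le_entry hT.1 ((Nat.lt_succ_iff.1 hi').trans hi) hj₁
      rw [hentry, show T.entry i₁ j₁ = k from h] at hle
      exact k.not_succ_le_self hle
    have := hT.2 j k hk
    omega
  · have hzero : T.content {c | c.1 < i + 1 ∧ J ≤ c.2} (k + 1) = 0 :=
      content_eq_zero fun i' j _ hc h ↦ hex ⟨j, hc.2, i', hc.1, h⟩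
    rw [hzero]
    exact (hμ k.le_succ).trans (Nat.le_add_right _ _)

lemma add_content_le (hμ : Antitone μ) (hT : IsLittlewoodRichardson μ T) (J : ℕ) {r : ℕ}
    (hkr : k + r < N) :
    μ (k + r) + T.content {c | c.1 < r ∧ J ≤ c.2} (k + r) ≤ μ k := by
  induction r with
  | zero =>
    have hzero : T.content {c | c.1 < 0 ∧ J ≤ c.2} k = 0 :=
      content_eq_zero fun i _ _ hc _ ↦ Nat.not_lt_zero i hc.1
    rw [add_zero, hzero, add_zero]
  | succ r ih =>
    exact (hT.add_content_succ_le hμ hkr r J).trans (ih ((k + r).lt_succ_self.trans hkr))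

lemma add_content_univ_le (hμ : Antitone μ) (hT : IsLittlewoodRichardson μ T) {r c : ℕ}
    (hrc : (r, c) ∉ ν) (hkr : k + r < N) :
    μ (k + r) + T.content Set.univ (k + r) ≤ μ k + c := by
  have hlt := content_lt_le hT.1 c (k + r)
  have hge : T.content {c' | c ≤ c'.2} (k + r) ≤
      T.content {c' | c'.1 < r ∧ c ≤ c'.2} (k + r) := by
    refine content_le_content fun i j hmem (hj : c ≤ j) h ↦ ⟨⟨?_, hj⟩, h⟩
    by_contra! hi
    exact hrc (ν.up_left_mem hi hj hmem)
  have hle := hT.add_content_le hμ c hkr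
  have := content_lt_add_content_le T c (k + r)
  omega

lemma entry_eq_row (hT : IsLittlewoodRichardson 0 T) {i j : ℕ} (h : (i, j) ∈ ν) :
    T.entry i j = i := by
  refine le_antisymm (not_lt.1 fun hlt ↦ ?_) (le_entry hT.1 h)
  obtain ⟨m, hm⟩ := Nat.exists_eq_add_of_lt hlt
  replace hm : T.entry i j = m + (i + 1) := by omega
  have hle := hT.add_content_le antitone_const 0 (hm ▸ entry_lt_iff.2 h)
  exact entry_ne_of_content_eq_zero (Nat.le_zero.1 (le_of_add_le_right hle)) h
    ⟨i.lt_succ_self, j.zero_le⟩ hm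

end IsLittlewoodRichardson

end LittlewoodRichardson

section Superstandard

/-- The filling of `ν` in which every cell contains the index of its row. -/
def superstandard (hν : ν.colLen 0 ≤ N) : Filling N ν := fun c ↦
  ⟨(c : ℕ × ℕ).1, (ν.mem_iff_lt_colLen.1 c.2).trans_le
    ((ν.colLen_anti 0 _ (Nat.zero_le _)).trans hν)⟩

lemma content_superstandard (hν : ν.colLen 0 ≤ N) (J k : ℕ) :
    (superstandard hν).content {c | J ≤ c.2} k = ν.rowLen k - J := by
  rw [content_setOf, ← Nat.card_Ico]
  refine card_bij' (fun c _ ↦ (c : ℕ × ℕ).2)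
    (fun j hj ↦ ⟨(k, j), ν.mem_iff_lt_rowLen.2 (mem_Ico.1 hj).2⟩) ?_ ?_ ?_ ?_
  · rintro ⟨⟨i, j⟩, hmem⟩ hc
    obtain ⟨-, hj, rfl⟩ := mem_filter.1 hc
    exact mem_Ico.2 ⟨hj, ν.mem_iff_lt_rowLen.1 hmem⟩
  · intro j hj
    exact mem_filter.2 ⟨mem_univ _, (mem_Ico.1 hj).1, rfl⟩
  · rintro ⟨⟨i, j⟩, hmem⟩ hc
    obtain ⟨-, -, rfl⟩ := mem_filter.1 hc
    rfl
  · exact fun _ _ ↦ rfl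

lemma content_univ_superstandard (hν : ν.colLen 0 ≤ N) :
    (superstandard hν).content Set.univ = ν.rowLen := by
  ext k
  simpa using content_superstandard hν 0 k

lemma isLittlewoodRichardson_zero_iff (hν : ν.colLen 0 ≤ N) :
    IsLittlewoodRichardson 0 T ↔ T = superstandard hν := by
  refine ⟨fun hT ↦ ?_, ?_⟩
  · ext c
    rw [← entry_coe, hT.entry_eq_row c.2]
    rfl
  · rintro rfl
    refine ⟨⟨fun i j _ _ ↦ le_rfl, fun i j _ _ ↦ i.lt_succ_self⟩, fun J k _ ↦ ?_⟩
    simp only [content_superstandard, Pi.zero_apply, zero_add]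
    exact Nat.sub_le_sub_right (ν.rowLen_anti _ _ k.le_succ) J

/-- The bialternant formula. -/
theorem alternant_zero_mul_schurPoly (hν : ν.colLen 0 ≤ N) :
    alternant ℤ (rhoShift N 0) * schurPoly N ν = alternant ℤ (rhoShift N ν.rowLen) := by
  classical
  rw [alternant_mul_schurPoly N ν (μ := 0) antitone_const]
  simp_rw [isLittlewoodRichardson_zero_iff hν]
  rw [sum_filter, sum_ite_eq' univ (superstandard hν), if_pos (mem_univ _),
    content_univ_superstandard, zero_add]

end Superstandard

end Filling

open Filling

section Expansion

variable {N : ℕ} {lam mu nu : YoungDiagram}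

lemma schurPoly_eq_zero (h : N < mu.colLen 0) : schurPoly N mu = 0 := by
  classical
  rw [schurPoly_eq_sum, sum_filter]
  refine sum_eq_zero fun T _ ↦ if_neg fun hT ↦ ?_
  have hmem : (N, 0) ∈ mu := mu.mem_iff_lt_colLen.2 h
  exact (le_entry hT hmem).not_gt (entry_lt_iff.2 hmem)

lemma eq_of_rhoShift_rowLen_eq (hlam : lam.colLen 0 ≤ N) (hmu : mu.colLen 0 ≤ N)
    (h : rhoShift N lam.rowLen = rhoShift N mu.rowLen) : lam = mu := by
  have hlt {l : YoungDiagram} (hl : l.colLen 0 ≤ N) {i j : ℕ} (hij : (i, j) ∈ l) : i < N :=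
    (l.mem_iff_lt_colLen.1 hij).trans_le ((l.colLen_anti 0 j j.zero_le).trans hl)
  rw [rhoShift_inj] at h
  ext ⟨i, j⟩
  simp only [YoungDiagram.mem_cells]
  exact ⟨fun hij ↦ mu.mem_iff_lt_rowLen.2 (h i (hlt hlam hij) ▸ lam.mem_iff_lt_rowLen.1 hij),
    fun hij ↦ lam.mem_iff_lt_rowLen.2 (h i (hlt hmu hij) ▸ mu.mem_iff_lt_rowLen.1 hij)⟩

lemma strictAnti_rhoShift_rowLen (N : ℕ) (l : YoungDiagram) : StrictAnti (rhoShift N l.rowLen) :=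
  strictAnti_rhoShift N fun i j ↦ l.rowLen_anti i j

lemma coeff_alternant_mul_sum_schurPoly {s : Finset YoungDiagram} (co : YoungDiagram → ℤ)
    (hs : ∀ l ∈ s, l.colLen 0 ≤ N) (hlam : lam ∈ s) :
    coeff (Finsupp.equivFunOnFinite.symm (rhoShift N lam.rowLen))
      (alternant ℤ (rhoShift N 0) * ∑ l ∈ s, co l • schurPoly N l) = co lam := by
  rw [mul_sum, coeff_sum, sum_eq_single_of_mem lam hlam]
  · rw [mul_smul_comm, alternant_zero_mul_schurPoly (hs lam hlam), coeff_smul,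
      coeff_alternant_of_strictAnti (strictAnti_rhoShift_rowLen N lam)
        (strictAnti_rhoShift_rowLen N lam), if_pos rfl, smul_eq_mul, mul_one]
  · intro l hl hne
    rw [mul_smul_comm, alternant_zero_mul_schurPoly (hs l hl), coeff_smul,
      coeff_alternant_of_strictAnti (strictAnti_rhoShift_rowLen N l)
        (strictAnti_rhoShift_rowLen N lam),
      if_neg (mt (eq_of_rhoShift_rowLen_eq (hs l hl) (hs lam hlam)) hne), smul_zero]

lemma exists_isLittlewoodRichardson_of_coeff_ne_zero
    (h : coeff (Finsupp.equivFunOnFinite.symm (rhoShift N lam.rowLen))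
      (alternant ℤ (rhoShift N 0) * (schurPoly N mu * schurPoly N nu)) ≠ 0) :
    ∃ T : Filling N nu, IsLittlewoodRichardson mu.rowLen T ∧
      ∀ i < N, mu.rowLen i + T.content Set.univ i = lam.rowLen i := by
  classical
  have hmu : mu.colLen 0 ≤ N := by
    by_contra! hlt
    simp [schurPoly_eq_zero hlt] at h
  have hanti : Antitone mu.rowLen := fun i j ↦ mu.rowLen_anti i j
  rw [← mul_assoc, alternant_zero_mul_schurPoly hmu, alternant_mul_schurPoly N nu hanti,
    coeff_sum] at h
  obtain ⟨T, hT, hcoeff⟩ := exists_ne_zero_of_sum_ne_zero h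
  rw [mem_filter_univ] at hT
  rw [coeff_alternant_of_strictAnti (strictAnti_rhoShift N (hT.antitone_add_content hanti))
    (strictAnti_rhoShift_rowLen N lam)] at hcoeff
  exact ⟨T, hT, rhoShift_inj.1 (ite_ne_right_iff.1 hcoeff).1⟩

end Expansion

theorem LR_outer_corner_bound_general {lam mu nu : YoungDiagram} {N : ℕ}
    {s : Finset YoungDiagram} {co : YoungDiagram → ℤ} (hs : ∀ l ∈ s, l.colLen 0 ≤ N)
    (hexp : schurPoly N mu * schurPoly N nu = ∑ l ∈ s, co l • schurPoly N l)
    (hlam : lam ∈ s) (hne : co lam ≠ 0) {c₁ r₁ c₂ r₂ : ℕ} (h₁ : (r₁, c₁) ∉ mu)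
    (h₂ : (r₂, c₂) ∉ nu) : (r₁ + r₂, c₁ + c₂) ∉ lam := by
  rw [← coeff_alternant_mul_sum_schurPoly co hs hlam, ← hexp] at hne
  obtain ⟨T, hT, hlen⟩ := exists_isLittlewoodRichardson_of_coeff_ne_zero hne
  intro hmem
  have hrow : r₁ + r₂ < N := (lam.mem_iff_lt_colLen.1 hmem).trans_le
    ((lam.colLen_anti 0 _ (Nat.zero_le _)).trans (hs lam hlam))
  have hle := hT.add_content_univ_le (fun i j ↦ mu.rowLen_anti i j) h₂ hrow
  have hlt := lam.mem_iff_lt_rowLen.1 hmem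
  have hmu : mu.rowLen r₁ ≤ c₁ := not_lt.1 (mt mu.mem_iff_lt_rowLen.2 h₁)
  have := hlen _ hrow
  omega

/-- **Positivity condition for the Littlewood–Richardson coefficients.**
The LR coefficient `c^λ_{μ,ν}` is the coefficient of `s_λ` in the Schur expansion of
`s_μ · s_ν` in `N ≥ |μ| + |ν|` variables; here this expansion is encoded by a
finitely supported coefficient family `co` (supported on diagrams with at most `N`
rows, which makes it unique).  If `c^λ_{μ,ν} ≠ 0`, then for every outer corner
`(c₁, r₁)` of `μ` and every outer corner `(c₂, r₂)` of `ν`, the point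
`(c₁ + c₂, r₁ + r₂)` does not belong to the Young diagram `[λ]`; that is,
`λ_{r₁+r₂+1} ≤ c₁ + c₂`. -/
theorem LR_outer_corner_bound (lam mu nu : YoungDiagram)
    (N : ℕ) (hN : mu.cells.card + nu.cells.card ≤ N)
    (co : YoungDiagram →₀ ℕ)
    (hrows : ∀ l ∈ co.support, l.colLen 0 ≤ N)
    (hexp : schurPoly N mu * schurPoly N nu = ∑ l ∈ co.support, (co l : ℤ) • schurPoly N l)
    (hne : co lam ≠ 0)
    (c₁ r₁ c₂ r₂ : ℕ) (h₁ : IsOuterCorner mu c₁ r₁) (h₂ : IsOuterCorner nu c₂ r₂) :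
    (r₁ + r₂, c₁ + c₂) ∉ lam ∧ lam.rowLen (r₁ + r₂) ≤ c₁ + c₂ := by
  have hbound : (r₁ + r₂, c₁ + c₂) ∉ lam :=
    LR_outer_corner_bound_general (co := fun l ↦ co l) hrows hexp (Finsupp.mem_support_iff.2 hne)
      (Int.natCast_ne_zero.2 hne) h₁.1 h₂.1
  exact ⟨hbound, not_lt.1 (mt lam.mem_iff_lt_rowLen.2 hbound)⟩
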